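/- Let ρ be a computable Borel probability measure on 2^ℕ and μ any Borel probability measure. Then μ ≪_ML ρ if and only if μ passes every ρ-Solovay test, i.e., lim_k μ(S_k) = 0 for every ρ-Solovay test (S_k). -/

import Mathlib

open MeasureTheory Filter

/-- Cantor space: the space of infinite binary sequences. -/
abbrev Cantor : Type := ℕ → Bool

/-- Finite binary strings. -/
abbrev BStr : Type := List Bool

/-- The cylinder set of sequences extending the string `x`. -/
def cyl (x : BStr) : Set Cantor := {Z | ∀ i : Fin x.length, Z i.1 = x.get i}

/-- The string of the first `n` bits of `Z`. -/
def seg (Z : Cantor) (n : ℕ) : BStr := List.ofFn fun i : Fin n => Z i.1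

/-- `lam` is the uniform (fair-coin product) measure: every cylinder `[x]`
has measure `2^{-|x|}`. -/
def IsUniform (lam : Measure Cantor) : Prop :=
  ∀ x : BStr, lam (cyl x) = (2 : ENNReal)⁻¹ ^ x.length

/-- `(G_m)` is a Martin-Löf test with respect to the measure `ρ`:
the sets `G_m` are uniformly effectively open and `ρ (G_m) ≤ 2^{-m}`. -/
def IsMLTest (ρ : Measure Cantor) (G : ℕ → Set Cantor) : Prop :=
  (∃ σ : ℕ → ℕ → BStr, Computable₂ σ ∧ ∀ m, G m = ⋃ i, cyl (σ m i)) ∧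
  ∀ m, ρ (G m) ≤ (2 : ENNReal)⁻¹ ^ m

/-- `μ` is Martin-Löf absolutely continuous in `ρ`: `inf_m μ(G_m) = 0`
for every `ρ`-Martin-Löf test `(G_m)`. -/
def MLAC (μ ρ : Measure Cantor) : Prop :=
  ∀ G : ℕ → Set Cantor, IsMLTest ρ G → ⨅ m, μ (G m) = 0

/-- `Z` is Martin-Löf random with respect to `lam`. -/
def MLRandom (lam : Measure Cantor) (Z : Cantor) : Prop :=
  ∀ G : ℕ → Set Cantor, IsMLTest lam G → Z ∉ ⋂ m, G m

/-- `ρ` is a computable measure: `ρ [x]` is a computable real, uniformly in `x`. -/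
def ComputableMeasure (ρ : Measure Cantor) : Prop :=
  ∃ q : BStr → ℕ → ℚ, Computable₂ q ∧
    ∀ x k, |(q x k : ℝ) - (ρ (cyl x)).toReal| ≤ (2 : ℝ)⁻¹ ^ k

/-- `U` is a universal plain machine. -/
def UniversalPlain (U : BStr →. BStr) : Prop :=
  Partrec U ∧ ∀ M : BStr →. BStr, Partrec M →
    ∃ c : ℕ, ∀ p x, x ∈ M p → ∃ q : BStr, q.length ≤ p.length + c ∧ x ∈ U q

/-- The domain of `M` is an antichain under the prefix relation. -/
def PrefixFreeDom (M : BStr →. BStr) : Prop :=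
  ∀ p q : BStr, (M p).Dom → (M q).Dom → p <+: q → p = q

/-- `U` is a universal prefix-free machine. -/
def UniversalPrefixFree (U : BStr →. BStr) : Prop :=
  Partrec U ∧ PrefixFreeDom U ∧
  ∀ M : BStr →. BStr, Partrec M → PrefixFreeDom M →
    ∃ c : ℕ, ∀ p x, x ∈ M p → ∃ q : BStr, q.length ≤ p.length + c ∧ x ∈ U q

/-- Kolmogorov complexity of the string `x` with respect to the machine `U`:
the minimal length of a `U`-description of `x`. -/
noncomputable def cpx (U : BStr →. BStr) (x : BStr) : ℕ :=
  sInf {n | ∃ q : BStr, q.length = n ∧ x ∈ U q}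

/-- A natural number `n` identified with the string `0^n`. -/
def numStr (n : ℕ) : BStr := List.replicate n false

/-- Complexity of the natural number `n` (i.e., of the string `0^n`). -/
noncomputable def cpxN (U : BStr →. BStr) (n : ℕ) : ℕ := cpx U (numStr n)

/-- The `μ`-average complexity of the strings of length `n`:
`Σ_{|x|=n} cpx(x) · μ[x]`. -/
noncomputable def avgCpx (U : BStr →. BStr) (μ : Measure Cantor) (n : ℕ) : ℝ :=
  ∑ v : Fin n → Bool, (cpx U (List.ofFn v) : ℝ) * (μ (cyl (List.ofFn v))).toReal

/-- A measure `μ` is trivial for the complexity given by the machine `U`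
(e.g. K-trivial when `U` is the universal prefix-free machine, C-trivial
when `U` is the universal plain machine). -/
def MeasTrivial (U : BStr →. BStr) (μ : Measure Cantor) : Prop :=
  ∃ c : ℝ, ∀ n : ℕ, avgCpx U μ n ≤ (cpxN U n : ℝ) + c

/-- A `ρ`-Solovay test: a sequence of uniformly effectively open sets `S_k`
with `Σ_k ρ(S_k) < ∞`. -/
def SolovayTest (ρ : Measure Cantor) (S : ℕ → Set Cantor) : Prop :=
  (∃ σ : ℕ → ℕ → BStr, Computable₂ σ ∧ ∀ k, S k = ⋃ i, cyl (σ k i)) ∧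
  (∑' k, ρ (S k)) ≠ ⊤

/-! ### Helper lemmas -/

theorem mlac_enum {f : ℕ → ℕ → Option BStr} (hf : Computable₂ f)
    (h : ∀ m, ∃ n, ∃ a, a ∈ f m n) :
    ∃ σ : ℕ → ℕ → BStr, Computable₂ σ ∧ ∀ m x, (∃ i, σ m i = x) ↔ ∃ n, f m n = some x := by
  have hdom : ∀ m, (Nat.rfindOpt (f m)).Dom := fun m => Nat.rfindOpt_dom.2 (h m)
  let d : ℕ → BStr := fun m => (Nat.rfindOpt (f m)).get (hdom m)
  have hd : Computable d := (Partrec.rfindOpt hf).of_eq_tot fun m => Part.get_mem _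
  refine ⟨fun m i => (f m i).getD (d m), ?_, ?_⟩
  · exact Computable.option_getD hf (hd.comp Computable.fst)
  · intro m x
    constructor
    · rintro ⟨i, rfl⟩
      cases e : f m i with
      | some a => exact ⟨i, by simp [e]⟩
      | none =>
        obtain ⟨n, hn⟩ := Nat.rfindOpt_spec (Part.get_mem (hdom m))
        exact ⟨n, by simpa [d, e] using hn⟩
    · rintro ⟨n, hn⟩
      exact ⟨n, by simp [hn]⟩

/-- Bounded search for a cylinder of the `k`-th set that contains the cylinder of `t`. -/
def mlacHit (σ : ℕ → ℕ → BStr) (t : BStr) (k s : ℕ) : Bool :=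
  Nat.rec (motive := fun _ => Bool) false
    (fun i b => b || decide (t.take (σ k i).length = σ k i)) s

/-- Number of `k < n` for which the bounded search succeeds. -/
def mlacCnt (σ : ℕ → ℕ → BStr) (t : BStr) (s n : ℕ) : ℕ :=
  Nat.rec (motive := fun _ => ℕ) 0 (fun k c => c + cond (mlacHit σ t k s) 1 0) n

theorem mlacHit_iff (σ : ℕ → ℕ → BStr) (t : BStr) (k s : ℕ) :
    mlacHit σ t k s = true ↔ ∃ i < s, t.take (σ k i).length = σ k i := by
  induction s with
  | zero => simp [mlacHit]
  | succ n ih =>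
    have : mlacHit σ t k (n+1) =
      (mlacHit σ t k n || decide (t.take (σ k n).length = σ k n)) := rfl
    rw [this, Bool.or_eq_true, ih, decide_eq_true_iff]
    simp only [Nat.lt_succ_iff_lt_or_eq, or_and_right, exists_or, exists_eq_left]

theorem mlacCnt_eq (σ : ℕ → ℕ → BStr) (t : BStr) (s n : ℕ) :
    mlacCnt σ t s n = ∑ k ∈ Finset.range n, cond (mlacHit σ t k s) 1 0 := by
  induction n with
  | zero => simp [mlacCnt]
  | succ n ih =>
    have : mlacCnt σ t s (n+1) = mlacCnt σ t s n + cond (mlacHit σ t n s) 1 0 := rfl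
    rw [this, ih, Finset.sum_range_succ]

theorem mlac_eq_computable {α : Type*} [Primcodable α] {f g : α → BStr}
    (hf : Computable f) (hg : Computable g) : Computable fun a => decide (f a = g a) := by
  have h : Primrec₂ fun a b : BStr => decide (a = b) := Primrec.eq.decide
  exact h.to_comp.comp hf hg

theorem mlac_le_computable {α : Type*} [Primcodable α] {f g : α → ℕ}
    (hf : Computable f) (hg : Computable g) : Computable fun a => decide (f a ≤ g a) := by
  have h : Primrec₂ fun a b : ℕ => decide (a ≤ b) := Primrec.nat_le.decide
  exact h.to_comp.comp hf hg

theorem mlacHit_computable {σ : ℕ → ℕ → BStr} (hσ : Computable₂ σ) :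
    Computable fun p : BStr × ℕ × ℕ => mlacHit σ p.1 p.2.1 p.2.2 := by
  unfold mlacHit
  refine Computable.nat_rec (α := BStr × ℕ × ℕ)
    (h := fun p q => q.2 || decide (p.1.take (σ p.2.1 q.1).length = σ p.2.1 q.1))
    (Computable.snd.comp Computable.snd) (Computable.const false) ?_
  have h1 : Computable fun a : (BStr × ℕ × ℕ) × (ℕ × Bool) => σ a.1.2.1 a.2.1 :=
    hσ.comp (Computable.fst.comp (Computable.snd.comp Computable.fst))
      (Computable.fst.comp Computable.snd)
  have h2 : Computable fun a : (BStr × ℕ × ℕ) × (ℕ × Bool) =>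
      a.1.1.take (σ a.1.2.1 a.2.1).length :=
    Primrec.list_take.to_comp.comp (Primrec.list_length.to_comp.comp h1)
      (Computable.fst.comp Computable.fst)
  exact Primrec.or.to_comp.comp (Computable.snd.comp Computable.snd) (mlac_eq_computable h2 h1)

theorem mlacCnt_computable {σ : ℕ → ℕ → BStr} (hσ : Computable₂ σ) :
    Computable fun p : BStr × ℕ => mlacCnt σ p.1 p.2 p.2 := by
  unfold mlacCnt
  refine Computable.nat_rec (α := BStr × ℕ)
    (h := fun p q => q.2 + cond (mlacHit σ p.1 q.1 p.2) 1 0)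
    Computable.snd (Computable.const 0) ?_
  have h1 : Computable fun a : (BStr × ℕ) × (ℕ × ℕ) => mlacHit σ a.1.1 a.2.1 a.1.2 :=
    Computable.comp (f := fun p : BStr × ℕ × ℕ => mlacHit σ p.1 p.2.1 p.2.2)
      (g := fun a : (BStr × ℕ) × (ℕ × ℕ) => (a.1.1, a.2.1, a.1.2))
      (mlacHit_computable hσ) ((Computable.fst.comp Computable.fst).pair
      ((Computable.fst.comp Computable.snd).pair (Computable.snd.comp Computable.fst)))
  exact Primrec.nat_add.to_comp.comp (Computable.snd.comp Computable.snd)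
    (Computable.cond h1 (Computable.const 1) (Computable.const 0))

theorem mlac_pow_computable (C : ℕ) : Computable fun m : ℕ => C * 2 ^ m := by
  have h0 : Computable₂ fun (_ : ℕ) (q : ℕ × ℕ) => 2 * q.2 :=
    Primrec.nat_double.to_comp.comp
      ((Computable.snd.comp Computable.snd : Computable fun p : ℕ × ℕ × ℕ => p.2.2))
  have h : Computable fun m : ℕ => Nat.rec (motive := fun _ => ℕ) C (fun _ x => 2 * x) m :=
    Computable.nat_rec (h := fun _ q => 2 * q.2) Computable.id (Computable.const C) h0
  refine h.of_eq fun m => ?_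
  induction m with
  | zero => simp
  | succ n ih => simp only [ih, pow_succ]; ring

/-- Enumeration of the strings that are covered `C * 2 ^ m` times. -/
def mlacOpt (σ : ℕ → ℕ → BStr) (C m j : ℕ) : Option BStr :=
  (Encodable.decode (α := BStr × ℕ) j).bind fun p =>
    cond (decide (C * 2 ^ m ≤ mlacCnt σ p.1 p.2 p.2)) (some p.1) none

theorem mlacOpt_computable {σ : ℕ → ℕ → BStr} (hσ : Computable₂ σ) (C : ℕ) :
    Computable₂ (mlacOpt σ C) := by
  unfold mlacOpt
  refine Computable.option_bind (α := ℕ × ℕ) (Computable.decode.comp Computable.snd) ?_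
  exact Computable.cond
    (mlac_le_computable ((mlac_pow_computable C).comp (Computable.fst.comp Computable.fst))
      ((mlacCnt_computable hσ).comp Computable.snd))
    (Computable.option_some.comp (Computable.fst.comp Computable.snd)) (Computable.const none)

theorem mlacOpt_iff (σ : ℕ → ℕ → BStr) (C m : ℕ) (x : BStr) :
    (∃ j, mlacOpt σ C m j = some x) ↔ ∃ s, C * 2 ^ m ≤ mlacCnt σ x s s := by
  constructor
  · rintro ⟨j, hj⟩
    unfold mlacOpt at hj
    obtain ⟨p, _, hp⟩ := Option.bind_eq_some_iff.1 hj
    by_cases h : C * 2 ^ m ≤ mlacCnt σ p.1 p.2 p.2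
    · simp [h] at hp
      exact ⟨p.2, hp ▸ h⟩
    · simp [h] at hp
  · rintro ⟨s, hs⟩
    refine ⟨Encodable.encode (x, s), ?_⟩
    simp [mlacOpt, Encodable.encodek, hs]

theorem mem_cyl_iff (Z : Cantor) (x : BStr) : Z ∈ cyl x ↔ seg Z x.length = x := by
  unfold cyl seg
  constructor
  · intro h
    apply List.ext_get
    · simp
    · intro n h1 h2
      simpa using h ⟨n, h2⟩
  · intro h i
    have := congrArg (fun l => l[i.1]?) h
    simpa using this

theorem seg_take (Z : Cantor) {n m : ℕ} (h : n ≤ m) : (seg Z m).take n = seg Z n := by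
  unfold seg
  apply List.ext_getElem
  · simp [h]
  · intro i h1 h2
    simp

theorem seg_length (Z : Cantor) (n : ℕ) : (seg Z n).length = n := by simp [seg]

theorem measurableSet_cyl (x : BStr) : MeasurableSet (cyl x) := by
  unfold cyl
  rw [Set.ofPred_forall]
  refine MeasurableSet.iInter fun i => ?_
  exact measurableSet_eq_fun (measurable_pi_apply i.1) measurable_const

theorem mem_cyl_of_take {Z : Cantor} {t x : BStr} (h : Z ∈ cyl t) (hx : t.take x.length = x) :
    Z ∈ cyl x := by
  rw [mem_cyl_iff] at *
  have hl : x.length ≤ t.length := by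
    have := congrArg List.length hx
    rw [List.length_take] at this
    omega
  rw [← seg_take Z hl, h, hx]

/-- The measure bound for the derived Martin-Löf test (Markov's inequality). -/
theorem mlac_bound (ρ : Measure Cantor) {σ : ℕ → ℕ → BStr} {S : ℕ → Set Cantor}
    (hS : ∀ k, S k = ⋃ i, cyl (σ k i)) {C : ℕ} (hC0 : C ≠ 0)
    (hC : ∑' k, ρ (S k) ≤ C) (m : ℕ) {G : Set Cantor}
    (hG : ∀ Z ∈ G, ∃ x s, C * 2 ^ m ≤ mlacCnt σ x s s ∧ Z ∈ cyl x) :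
    ρ G ≤ (2 : ENNReal)⁻¹ ^ m := by
  have hSm : ∀ k, MeasurableSet (S k) := fun k => by
    rw [hS]; exact MeasurableSet.iUnion fun i => measurableSet_cyl _
  let f : Cantor → ENNReal := fun Z => ∑' k, (S k).indicator 1 Z
  have hint : ∫⁻ Z, f Z ∂ρ = ∑' k, ρ (S k) := by
    simp only [f]
    rw [lintegral_tsum fun k => ((measurable_one).indicator (hSm k)).aemeasurable]
    simp [lintegral_indicator_one, hSm]
  have hfm : Measurable f := Measurable.ennreal_tsum fun k => measurable_one.indicator (hSm k)
  have hsub : G ⊆ {Z | ((C * 2 ^ m : ℕ) : ENNReal) ≤ f Z} := by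
    intro Z hZ
    obtain ⟨x, s, hcnt, hx⟩ := hG Z hZ
    calc ((C * 2 ^ m : ℕ) : ENNReal) ≤ (mlacCnt σ x s s : ℕ) := by exact_mod_cast hcnt
      _ = ∑ k ∈ Finset.range s, ((cond (mlacHit σ x k s) 1 0 : ℕ) : ENNReal) := by
        rw [mlacCnt_eq]; push_cast; rfl
      _ ≤ ∑ k ∈ Finset.range s, (S k).indicator 1 Z := by
        refine Finset.sum_le_sum fun k _ => ?_
        cases e : mlacHit σ x k s with
        | false => simp
        | true =>
          obtain ⟨i, _, hi⟩ := (mlacHit_iff _ _ _ _).1 e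
          have : Z ∈ S k := by
            rw [hS]; exact Set.mem_iUnion.2 ⟨i, mem_cyl_of_take hx hi⟩
          simp [this]
      _ ≤ f Z := ENNReal.sum_le_tsum _
  have hmk := mul_meas_ge_le_lintegral₀ (μ := ρ) hfm.aemeasurable ((C * 2 ^ m : ℕ) : ENNReal)
  rw [hint] at hmk
  have h1 : ((C * 2 ^ m : ℕ) : ENNReal) * ρ G ≤ C :=
    (mul_le_mul_right (measure_mono hsub) _).trans (hmk.trans hC)
  have hCne : (C : ENNReal) ≠ 0 := by exact_mod_cast hC0
  have h2 : (2 : ENNReal) ^ m * ρ G ≤ 1 := by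
    have : (C : ENNReal) * (2 ^ m * ρ G) ≤ C * 1 := by
      rw [← mul_assoc, mul_one]; simpa using h1
    exact (ENNReal.mul_le_mul_iff_right hCne (ENNReal.natCast_ne_top C)).1 this
  rw [← ENNReal.inv_pow]
  have := ENNReal.le_div_iff_mul_le (a := ρ G) (b := (2:ENNReal)^m) (c := 1)
    (Or.inl (by simp)) (Or.inl (by simp))
  rw [← one_div]
  exact this.2 (by rwa [mul_comm])

theorem mlac_mem {σ : ℕ → ℕ → BStr} {S : ℕ → Set Cantor}
    (hS : ∀ k, S k = ⋃ i, cyl (σ k i)) {Z : Cantor} (hZ : {k | Z ∈ S k}.Infinite) (N : ℕ) :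
    ∃ x s, N ≤ mlacCnt σ x s s ∧ Z ∈ cyl x := by
  obtain ⟨F, hF, hFc⟩ := hZ.exists_subset_card_eq N
  have h1 : ∀ k, ∃ i, k ∈ F → Z ∈ cyl (σ k i) := by
    intro k
    by_cases hk : k ∈ F
    · have h : Z ∈ S k := hF hk
      rw [hS] at h
      obtain ⟨i, hi⟩ := Set.mem_iUnion.1 h
      exact ⟨i, fun _ => hi⟩
    · exact ⟨0, fun h => absurd h hk⟩
  choose i hi using h1
  have h2 : ∀ᶠ s : ℕ in atTop, ∀ k ∈ F, k < s ∧ i k < s ∧ (σ k (i k)).length ≤ s :=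
    (Filter.eventually_all_finset F).2 fun k _ =>
      (eventually_gt_atTop k).and ((eventually_gt_atTop (i k)).and (eventually_ge_atTop _))
  obtain ⟨s, hs⟩ := h2.exists
  refine ⟨seg Z s, s, ?_, ?_⟩
  · rw [mlacCnt_eq, ← hFc, Finset.card_eq_sum_ones]
    calc ∑ k ∈ F, 1 = ∑ k ∈ F, cond (mlacHit σ (seg Z s) k s) 1 0 := by
          refine Finset.sum_congr rfl fun k hk => ?_
          have : mlacHit σ (seg Z s) k s = true := by
            rw [mlacHit_iff]
            refine ⟨i k, (hs k hk).2.1, ?_⟩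
            rw [seg_take Z (hs k hk).2.2]
            exact (mem_cyl_iff _ _).1 (hi k hk)
          simp [this]
      _ ≤ _ := Finset.sum_le_sum_of_subset fun k hk => Finset.mem_range.2 (hs k hk).1
  · rw [mem_cyl_iff, seg_length]

theorem mlac_limsup (μ : Measure Cantor) [IsProbabilityMeasure μ] {S : ℕ → Set Cantor}
    (hSm : ∀ k, MeasurableSet (S k)) {ε : ENNReal} (h : ∃ᶠ k in atTop, ε ≤ μ (S k)) :
    ε ≤ μ {Z | {k | Z ∈ S k}.Infinite} := by
  let T : ℕ → Set Cantor := fun n => ⋃ k, ⋃ (_ : n ≤ k), S k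
  have hT : {Z | {k | Z ∈ S k}.Infinite} = ⋂ n, T n := by
    ext Z
    simp only [T, Set.mem_setOf_eq, Set.mem_iInter, Set.mem_iUnion, exists_prop]
    rw [← Nat.frequently_atTop_iff_infinite, frequently_atTop]
  have ha : Antitone T := fun a b hab =>
    Set.iUnion_mono fun k => Set.iUnion_mono' fun hk => ⟨hab.trans hk, le_rfl⟩
  rw [hT, ha.measure_iInter
    (fun n => (MeasurableSet.iUnion fun k => MeasurableSet.iUnion fun _ =>
      hSm k).nullMeasurableSet) ⟨0, measure_ne_top _ _⟩]
  refine le_iInf fun n => ?_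
  obtain ⟨k, hk, hke⟩ := (frequently_atTop.1 h) n
  exact hke.trans (measure_mono (Set.subset_iUnion₂ (s := fun k (_ : n ≤ k) => S k) k hk))

/-- for a computable measure `ρ` and any measure `μ`,
`μ ≪_ML ρ` iff `μ` passes every `ρ`-Solovay test (`lim_k μ(S_k) = 0`). -/
theorem MLAC_iff_passes_solovay_tests
    (ρ : Measure Cantor) [IsProbabilityMeasure ρ] (hcomp : ComputableMeasure ρ)
    (μ : Measure Cantor) [IsProbabilityMeasure μ] :
    MLAC μ ρ ↔
      ∀ S : ℕ → Set Cantor, SolovayTest ρ S →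
        Tendsto (fun k => μ (S k)) atTop (nhds 0) := by
  constructor
  · intro hML S ⟨⟨σ, hσ, hS⟩, hsum⟩
    by_contra hnot
    have hSm : ∀ k, MeasurableSet (S k) := fun k => by
      rw [hS]; exact MeasurableSet.iUnion fun i => measurableSet_cyl _
    obtain ⟨ε, hε, hfreq⟩ : ∃ ε > 0, ∃ᶠ k in atTop, ε ≤ μ (S k) := by
      by_contra hcon
      push Not at hcon
      apply hnot
      rw [ENNReal.tendsto_nhds_zero]
      intro ε hε
      exact (hcon ε hε).mono fun k hk => hk.le
    have hlim := mlac_limsup μ hSm hfreq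
    obtain ⟨C, hC⟩ := ENNReal.exists_nat_gt hsum
    have hC0 : C ≠ 0 := by
      rintro rfl
      simp at hC
    have hne : ∃ Z : Cantor, {k | Z ∈ S k}.Infinite := by
      by_contra hcon
      push Not at hcon
      have : {Z : Cantor | {k | Z ∈ S k}.Infinite} = ∅ :=
        Set.eq_empty_of_forall_notMem fun Z hZ => hZ (hcon Z)
      rw [this, measure_empty] at hlim
      exact absurd hlim (not_le.2 hε)
    obtain ⟨Z₀, hZ₀⟩ := hne
    obtain ⟨τ, hτ, hτ'⟩ := mlac_enum (mlacOpt_computable hσ C) fun m => by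
      obtain ⟨x, s, h, _⟩ := mlac_mem hS hZ₀ (C * 2 ^ m)
      obtain ⟨j, hj⟩ := (mlacOpt_iff σ C m x).2 ⟨s, h⟩
      exact ⟨j, x, hj⟩
    have hmem : ∀ m Z, Z ∈ (⋃ i, cyl (τ m i)) ↔
        ∃ x s, C * 2 ^ m ≤ mlacCnt σ x s s ∧ Z ∈ cyl x := by
      intro m Z
      rw [Set.mem_iUnion]
      constructor
      · rintro ⟨i, hi⟩
        obtain ⟨s, hs⟩ := (mlacOpt_iff σ C m _).1 ((hτ' m _).1 ⟨i, rfl⟩)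
        exact ⟨_, s, hs, hi⟩
      · rintro ⟨x, s, hs, hx⟩
        obtain ⟨i, hi⟩ := (hτ' m x).2 ((mlacOpt_iff σ C m x).2 ⟨s, hs⟩)
        exact ⟨i, hi ▸ hx⟩
    have h0 := hML (fun m => ⋃ i, cyl (τ m i)) ⟨⟨τ, hτ, fun _ => rfl⟩, fun m =>
      mlac_bound ρ hS hC0 hC.le m fun Z hZ => (hmem m Z).1 hZ⟩
    have hle : ε ≤ ⨅ m, μ (⋃ i, cyl (τ m i)) := le_iInf fun m =>
      hlim.trans (measure_mono fun Z hZ => (hmem m Z).2 (mlac_mem hS hZ _))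
    rw [h0] at hle
    exact absurd hle (not_le.2 hε)
  · intro h G hG
    have ht := h G ⟨hG.1, by
      refine ne_top_of_le_ne_top ?_ (ENNReal.tsum_le_tsum hG.2)
      rw [ENNReal.tsum_geometric]
      simp⟩
    refine le_antisymm ?_ (zero_le)
    exact ge_of_tendsto ht (Eventually.of_forall fun m => iInf_le _ m)
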